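/- arXiv:2105.15069 — 2 statements merged into one kernel-verified Lean document; each statement's English description precedes it below -/
import Mathlib

section
/- Suppose L is a tree distance, i.e., there is a simple graph T on vertex set Y which is a tree (connected with no cycles) and a weight function w assigning a strictly positive real to each edge of T, such that L y y' equals the sum of the weights of the edges of the unique path in T from y to y', for all y, y'. Then the Max-Margin loss embeds 2L with embedding ψ(y) = −L_y; more precisely: (a) H_M(q) = 2 · H_L(q) for all q ∈ Δ; (b) for all q ∈ Δ and y ∈ Y, y ∈ y⋆(q) if and only if the vector (−L y y')_{y'∈Y} belongs to v⋆_M(q); and (c) S_M((−L y y')_{y'∈Y}, z) = 2 · L y z for all y, z ∈ Y. -/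
open Finset Set

variable {Y : Type*} [Fintype Y] [DecidableEq Y] [Nonempty Y]

/-- Probability simplex over `Y`. -/
def simplexSet (Y : Type*) [Fintype Y] : Set (Y → ℝ) :=
  {q | (∀ y, 0 ≤ q y) ∧ ∑ y, q y = 1}

/-- Bayes risk of the discrete loss `L`. -/
noncomputable def HL (L : Y → Y → ℝ) (q : Y → ℝ) : ℝ :=
  ⨅ y : Y, ∑ y', L y y' * q y'

/-- Optimal-label set. -/
noncomputable def ystar (L : Y → Y → ℝ) (q : Y → ℝ) : Set Y :=
  {y | ∑ y', L y y' * q y' = HL L q}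

/-- Prediction set of label `y`. -/
noncomputable def predSet (L : Y → Y → ℝ) (y : Y) : Set (Y → ℝ) :=
  {q ∈ simplexSet Y | y ∈ ystar L q}

/-- Max-Margin loss. -/
noncomputable def SM (L : Y → Y → ℝ) (v : Y → ℝ) (y : Y) : ℝ :=
  ⨆ y' : Y, (L y y' + v y' - v y)

/-- Bayes risk of the Max-Margin loss. -/
noncomputable def HM (L : Y → Y → ℝ) (q : Y → ℝ) : ℝ :=
  ⨅ v : Y → ℝ, ∑ y, q y * SM L v y

/-- Conditional-risk minimizers of the Max-Margin loss. -/
noncomputable def vstarM (L : Y → Y → ℝ) (q : Y → ℝ) : Set (Y → ℝ) :=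
  {v | ∑ y, q y * SM L v y = HM L q}

/-- Restricted-Max-Margin loss. -/
noncomputable def SRM (L : Y → Y → ℝ) (v : Y → ℝ) (y : Y) : ℝ :=
  sSup ((fun q => ∑ y', L y y' * q y' + ∑ z, v z * q z) '' predSet L y) - v y

/-- Bayes risk of the Restricted-Max-Margin loss. -/
noncomputable def HRM (L : Y → Y → ℝ) (q : Y → ℝ) : ℝ :=
  ⨅ v : Y → ℝ, ∑ y, q y * SRM L v y

/-- Conditional-risk minimizers of the Restricted-Max-Margin loss. -/
noncomputable def vstarRM (L : Y → Y → ℝ) (q : Y → ℝ) : Set (Y → ℝ) :=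
  {v | ∑ y, q y * SRM L v y = HRM L q}

/-- Max-Min-Margin loss. -/
noncomputable def SMM (L : Y → Y → ℝ) (v : Y → ℝ) (y : Y) : ℝ :=
  sSup ((fun q => (⨅ z : Y, ∑ y', L z y' * q y') + ∑ z, v z * q z) '' simplexSet Y) - v y

/-- Bayes risk of the Max-Min-Margin loss. -/
noncomputable def HMM (L : Y → Y → ℝ) (q : Y → ℝ) : ℝ :=
  ⨅ v : Y → ℝ, ∑ y, q y * SMM L v y

/-- Transportation polytope `U(q, q)`. -/
def Upoly (q : Y → ℝ) : Set (Y → Y → ℝ) :=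
  {Q | (∀ y y', 0 ≤ Q y y') ∧ (∀ y, ∑ y', Q y y' = q y) ∧ (∀ y', ∑ y, Q y y' = q y')}

/-- The constraint set `C_L`. -/
def CL (L : Y → Y → ℝ) : Set (Y → Y → ℝ) :=
  {Q | ∀ y z : Y, ∑ y', L y y' * Q y y' ≤ ∑ y', L z y' * Q y y'}

section TreeDistance

variable {V : Type*} {T : SimpleGraph V} {w : Sym2 V → ℝ} {L : V → V → ℝ}

/-- `L` is the path metric on the graph `T` with edge weights `w`. -/
def IsPathWeight (T : SimpleGraph V) (w : Sym2 V → ℝ) (L : V → V → ℝ) : Prop :=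
  ∀ (y y' : V) (p : T.Walk y y'), p.IsPath → L y y' = (p.edges.map w).sum

namespace IsPathWeight

theorem eq_zero (hL : IsPathWeight T w L) (a : V) : L a a = 0 := by
  simpa using hL a a .nil .nil

theorem symm (hL : IsPathWeight T w L) (hT : T.IsTree) (a b : V) : L a b = L b a := by
  obtain ⟨p, hp, -⟩ := hT.existsUnique_path a b
  rw [hL a b p hp, hL b a p.reverse hp.reverse, SimpleGraph.Walk.edges_reverse,
    List.map_reverse, List.sum_reverse]

theorem eq_add_of_mem_support (hL : IsPathWeight T w L) {a b c : V} (p : T.Walk a c)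
    (hp : p.IsPath) (hb : b ∈ p.support) : L a c = L a b + L b c := by
  classical
  rw [hL a b _ (hp.takeUntil hb), hL b c _ (hp.dropUntil hb), hL a c p hp, ← List.sum_append,
    ← List.map_append, ← SimpleGraph.Walk.edges_append, p.take_spec hb]

theorem le_sum_edges (hL : IsPathWeight T w L) (hw : ∀ e ∈ T.edgeSet, 0 < w e) {a b : V}
    (p : T.Walk a b) : L a b ≤ (p.edges.map w).sum := by
  classical
  rw [hL a b _ p.bypass_isPath]
  refine (p.edges_bypass_sublist_edges.map w).sum_le_sum fun x hx => ?_
  obtain ⟨e, he, rfl⟩ := List.mem_map.1 hx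
  exact (hw e (p.edges_subset_edgeSet he)).le

theorem triangle (hL : IsPathWeight T w L) (hT : T.IsTree) (hw : ∀ e ∈ T.edgeSet, 0 < w e)
    (a b c : V) : L a c ≤ L a b + L b c := by
  obtain ⟨p, hp, -⟩ := hT.existsUnique_path a b
  obtain ⟨r, hr, -⟩ := hT.existsUnique_path b c
  rw [hL a b p hp, hL b c r hr, ← List.sum_append, ← List.map_append,
    ← SimpleGraph.Walk.edges_append]
  exact hL.le_sum_edges hw _

theorem adj_pos (hL : IsPathWeight T w L) (hw : ∀ e ∈ T.edgeSet, 0 < w e) {a b : V}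
    (h : T.Adj a b) : 0 < L a b := by
  have := hL a b h.toWalk (by simp [h.ne])
  rw [this]
  simpa using hw s(a, b) h

theorem adj_dichotomy (hL : IsPathWeight T w L) (hT : T.IsTree) {a b : V} (h : T.Adj a b)
    (z : V) : L a z = L a b + L b z ∨ L b z = L b a + L a z := by
  obtain ⟨p, hp, -⟩ := hT.existsUnique_path b z
  by_cases ha : a ∈ p.support
  · exact .inr (hL.eq_add_of_mem_support p hp ha)
  · exact .inl (hL.eq_add_of_mem_support (.cons h p) (hp.cons ha) (by simp))

/-- Removing the edge `ab` separates the vertices closer to `a` from those closer to `b`. -/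
theorem eq_add_of_sides (hL : IsPathWeight T w L) (hT : T.IsTree)
    (hw : ∀ e ∈ T.edgeSet, 0 < w e) {a b y z : V} (h : T.Adj a b)
    (hy : L a y = L a b + L b y) (hz : L b z = L b a + L a z) : L z y = L z a + L a y := by
  obtain ⟨p, hp, -⟩ := hT.existsUnique_path b y
  obtain ⟨r, hr, -⟩ := hT.existsUnique_path z a
  have hdisj : ∀ x ∈ r.support, x ∉ p.support := fun x hxr hxp => by
    have h₁ := hL.eq_add_of_mem_support p hp hxp
    have h₂ := hL.eq_add_of_mem_support r hr hxr
    have h₃ := hL.triangle hT hw b x z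
    have h₄ := hL.triangle hT hw a x y
    have h₅ := hL.adj_pos hw h
    linarith [hL.symm hT a b, hL.symm hT a z, hL.symm hT x z, hL.symm hT x a]
  refine hL.eq_add_of_mem_support (r.append (.cons h p)) ?_ ?_
  · rw [SimpleGraph.Walk.isPath_def, SimpleGraph.Walk.support_append,
      SimpleGraph.Walk.support_cons, List.tail_cons, List.nodup_append']
    exact ⟨hr.support_nodup, hp.support_nodup, fun x hx hx' => hdisj x hx hx'⟩
  · simp [SimpleGraph.Walk.mem_support_append_iff]

theorem exists_adj_eq_add (hL : IsPathWeight T w L) (hT : T.IsTree) {a y : V} (hne : a ≠ y) :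
    ∃ b, T.Adj a b ∧ L a y = L a b + L b y := by
  obtain ⟨p, hp, -⟩ := hT.existsUnique_path a y
  cases p with
  | nil => exact absurd rfl hne
  | @cons _ b _ h r => exact ⟨b, h, hL.eq_add_of_mem_support (.cons h r) hp (by simp)⟩

/-- Hyperconvexity of the geometric realization of a weighted tree: balls `B(y, h y)` that satisfy
`L y z ≤ h y + h z` have a common point, at proportion `s` along the segment from `a` to `b`. -/
theorem exists_segment_le [Finite V] [Nonempty V] (hL : IsPathWeight T w L) (hT : T.IsTree)
    (hw : ∀ e ∈ T.edgeSet, 0 < w e) (h : V → ℝ) (hh : ∀ y z, L y z ≤ h y + h z) :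
    ∃ (a b : V) (s : ℝ), 0 ≤ s ∧ s ≤ 1 ∧ ∀ y, (1 - s) * L a y + s * L b y ≤ h y := by
  choose m hm using fun x => Finite.exists_max fun y => L x y - h y
  obtain ⟨a, ha⟩ := Finite.exists_min fun x => L x (m x) - h (m x)
  set r := L a (m a) - h (m a) with hr
  by_cases hr0 : r ≤ 0
  · exact ⟨a, a, 0, le_rfl, zero_le_one, fun y => by linarith [hm a y]⟩
  push Not at hr0
  have hne : a ≠ m a := fun he => by
    have h₁ := hh (m a) (m a)
    have h₂ := hL.eq_zero (m a)
    rw [← he] at hr h₁ h₂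
    linarith
  obtain ⟨b, hab, hb⟩ := hL.exists_adj_eq_add hT hne
  have hpos := hL.adj_pos hw hab
  have hsymm := hL.symm hT a b
  have hz : L b (m b) = L b a + L a (m b) := by
    refine (hL.adj_dichotomy hT hab (m b)).resolve_left fun h₁ => ?_
    linarith [hm a (m b), ha b]
  have hrw : r ≤ L a b := by
    have := hL.eq_add_of_sides hT hw hab hb hz
    linarith [hh (m b) (m a), ha b, hL.symm hT a (m b)]
  refine ⟨a, b, r / L a b, by positivity, (div_le_one hpos).2 hrw, fun y => ?_⟩
  have hs : r / L a b * L a b = r := div_mul_cancel₀ _ hpos.ne'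
  rcases hL.adj_dichotomy hT hab y with hy | hy
  · have : (1 - r / L a b) * L a y + r / L a b * L b y = L a y - r := by
      rw [hy]; linear_combination -hs
    linarith [hm a y]
  · have : (1 - r / L a b) * L a y + r / L a b * L b y = L a y + r := by
      rw [hy, ← hsymm]; linear_combination hs
    linarith [hL.eq_add_of_sides hT hw hab hb hy, hh y (m a), hL.symm hT a y]

end IsPathWeight

end TreeDistance

section MaxMargin

variable {V : Type*} [Fintype V] {L : V → V → ℝ}

theorem le_SM (L : V → V → ℝ) (v : V → ℝ) (y z : V) : L y z + v z - v y ≤ SM L v y :=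
  le_ciSup (f := fun z => L y z + v z - v y) (Set.finite_range _).bddAbove z

theorem HL_le (L : V → V → ℝ) (q : V → ℝ) (y : V) : HL L q ≤ ∑ y', L y y' * q y' :=
  ciInf_le (f := fun y => ∑ y', L y y' * q y') (Set.finite_range _).bddBelow y

theorem SM_neg_eq [Nonempty V] (hself : ∀ a, L a a = 0) (hsymm : ∀ a b, L a b = L b a)
    (htri : ∀ a b c, L a c ≤ L a b + L b c) (y z : V) :
    SM L (fun y' => -(L y y')) z = 2 * L y z := by
  refine le_antisymm (ciSup_le fun x => ?_) ?_
  · linarith [htri z y x, hsymm y z]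
  · linarith [le_SM L (fun y' => -(L y y')) z y, hself y, hsymm y z]

theorem IsPathWeight.two_mul_HL_le [Nonempty V] {T : SimpleGraph V} {w : Sym2 V → ℝ}
    (hL : IsPathWeight T w L) (hT : T.IsTree) (hw : ∀ e ∈ T.edgeSet, 0 < w e) {q : V → ℝ}
    (hq : ∀ y, 0 ≤ q y) (v : V → ℝ) : 2 * HL L q ≤ ∑ y, q y * SM L v y := by
  obtain ⟨a, b, s, hs₀, hs₁, hab⟩ := hL.exists_segment_le hT hw (fun y => SM L v y / 2)
    fun y z => by linarith [le_SM L v y z, le_SM L v z y, hL.symm hT y z]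
  calc 2 * HL L q = 2 * ((1 - s) * HL L q + s * HL L q) := by ring
    _ ≤ 2 * ((1 - s) * ∑ y, L a y * q y + s * ∑ y, L b y * q y) := by
      have := sub_nonneg.2 hs₁
      gcongr <;> exact HL_le L q _
    _ = ∑ y, q y * (2 * ((1 - s) * L a y + s * L b y)) := by
      simp only [Finset.mul_sum, ← Finset.sum_add_distrib]
      exact Finset.sum_congr rfl fun y _ => by ring
    _ ≤ ∑ y, q y * SM L v y := Finset.sum_le_sum fun y _ =>
      mul_le_mul_of_nonneg_left (by linarith [hab y]) (hq y)

end MaxMargin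

theorem stmt1 (Y : Type*) [Fintype Y] [DecidableEq Y] [Nonempty Y] (L : Y → Y → ℝ)
    (hcard : 2 ≤ Fintype.card Y)
    (hnonneg : ∀ y y', 0 ≤ L y y')
    (hzero : ∀ y y', L y y' = 0 ↔ y = y')
    (T : SimpleGraph Y) (hT : T.IsTree) (w : Sym2 Y → ℝ)
    (hw : ∀ e ∈ T.edgeSet, 0 < w e)
    (hL : ∀ (y y' : Y) (p : T.Walk y y'), p.IsPath → L y y' = (p.edges.map w).sum) :
    (∀ q ∈ simplexSet Y, HM L q = 2 * HL L q) ∧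
    (∀ q ∈ simplexSet Y, ∀ y : Y,
      y ∈ ystar L q ↔ (fun y' => -(L y y')) ∈ vstarM L q) ∧
    (∀ y z : Y, SM L (fun y' => -(L y y')) z = 2 * L y z) := by
  have hd : IsPathWeight T w L := hL
  have hc := SM_neg_eq hd.eq_zero (hd.symm hT) (hd.triangle hT hw)
  have hrisk (q : Y → ℝ) (y : Y) :
      ∑ z, q z * SM L (fun y' => -(L y y')) z = 2 * ∑ z, L y z * q z := by
    rw [Finset.mul_sum]
    exact Finset.sum_congr rfl fun z _ => by rw [hc]; ring
  have ha : ∀ q ∈ simplexSet Y, HM L q = 2 * HL L q := fun q hq => by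
    refine le_antisymm ?_ (le_ciInf (hd.two_mul_HL_le hT hw hq.1))
    obtain ⟨y, hy⟩ := exists_eq_ciInf_of_finite (f := fun y => ∑ y', L y y' * q y')
    have hbdd : BddBelow (Set.range fun v : Y → ℝ => ∑ y, q y * SM L v y) :=
      ⟨2 * HL L q, Set.forall_mem_range.2 (hd.two_mul_HL_le hT hw hq.1)⟩
    exact (ciInf_le hbdd fun y' => -(L y y')).trans_eq ((hrisk q y).trans (congrArg (2 * ·) hy))
  refine ⟨ha, fun q hq y => ?_, hc⟩
  simp only [ystar, vstarM, Set.mem_ofPred_eq]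
  rw [hrisk, ha q hq, mul_right_inj' two_ne_zero]
end

section
/- For every q ∈ Δ, the Bayes risk of the Restricted-Max-Margin loss satisfies H_RM(q) = max_{Q ∈ U(q, q) ∩ C_L} ⟨L, Q⟩_F (the set U(q, q) ∩ C_L is nonempty, as it contains the diagonal matrix with entries q y on the diagonal, and is compact). -/
open Finset Set

variable {Y : Type*} [Fintype Y] [DecidableEq Y] [Nonempty Y]

lemma mem_predSet_iff (L : Y → Y → ℝ) (y : Y) (p : Y → ℝ) :
    p ∈ predSet L y ↔ p ∈ simplexSet Y ∧
      ∀ z, ∑ y', L y y' * p y' ≤ ∑ y', L z y' * p y' := by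
  refine and_congr_right fun _ => ⟨fun h z => ?_, fun h => ?_⟩
  · rw [show ∑ y', L y y' * p y' = HL L p from h]
    exact ciInf_le (Set.finite_range _).bddBelow z
  · exact le_antisymm (le_ciInf h) (ciInf_le (Set.finite_range _).bddBelow y)

lemma single_mem_predSet {L : Y → Y → ℝ} (hnonneg : ∀ y y', 0 ≤ L y y')
    (hself : ∀ y, L y y = 0) (y : Y) : Pi.single y 1 ∈ predSet L y := by
  refine (mem_predSet_iff L y _).2 ⟨single_mem_stdSimplex ℝ y, fun z => ?_⟩
  simpa [Pi.single_apply, hself] using hnonneg z y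

lemma isCompact_predSet (L : Y → Y → ℝ) (y : Y) : IsCompact (predSet L y) := by
  have h : predSet L y = stdSimplex ℝ Y ∩
      ⋂ z, {p | ∑ y', L y y' * p y' ≤ ∑ y', L z y' * p y'} := by
    ext p
    simp only [mem_predSet_iff, Set.mem_inter_iff, Set.mem_iInter, Set.mem_ofPred_eq]
    rfl
  rw [h]
  exact (isCompact_stdSimplex ℝ Y).inter_right
    (isClosed_iInter fun z => isClosed_le (by fun_prop) (by fun_prop))

lemma convex_predSet (L : Y → Y → ℝ) (y : Y) : Convex ℝ (predSet L y) := by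
  intro p hp r hr a b ha hb hab
  rw [mem_predSet_iff] at *
  refine ⟨convex_stdSimplex ℝ Y hp.1 hr.1 ha hb hab, fun z => ?_⟩
  have expand : ∀ x, ∑ y', L x y' * (a • p + b • r) y' =
      a * ∑ y', L x y' * p y' + b * ∑ y', L x y' * r y' := fun x => by
    simp only [Finset.mul_sum, ← Finset.sum_add_distrib, Pi.add_apply, Pi.smul_apply, smul_eq_mul]
    exact Finset.sum_congr rfl fun _ _ => by ring
  rw [expand, expand]
  exact add_le_add (mul_le_mul_of_nonneg_left (hp.2 z) ha) (mul_le_mul_of_nonneg_left (hr.2 z) hb)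

lemma isCompact_image_predSet (L : Y → Y → ℝ) (v : Y → ℝ) (y : Y) :
    IsCompact ((fun p => ∑ y', L y y' * p y' + ∑ z, v z * p z) '' predSet L y) :=
  (isCompact_predSet L y).image (by fun_prop)

/-- A row of a matrix in `CL L` with total mass `m` is `m` times a point of `predSet L y`, so its
value is at most `m` times the supremum defining `SRM`. -/
lemma row_value_le_mul_SRM {L : Y → Y → ℝ} (v : Y → ℝ) (y : Y) {r : Y → ℝ}
    (hr : ∀ y', 0 ≤ r y') (hopt : ∀ z, ∑ y', L y y' * r y' ≤ ∑ y', L z y' * r y') :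
    ∑ y', L y y' * r y' + ∑ z, v z * r z ≤ (∑ y', r y') * (SRM L v y + v y) := by
  rcases (Finset.sum_nonneg fun y' _ => hr y').eq_or_lt with h0 | hpos
  · have hr0 : ∀ y', r y' = 0 := fun y' =>
      (Finset.sum_eq_zero_iff_of_nonneg fun z _ => hr z).1 h0.symm y' (Finset.mem_univ y')
    simp [hr0]
  · set m := ∑ y', r y' with hm
    have scale : ∀ a : Y → ℝ, ∑ z, a z * (r z / m) = (∑ z, a z * r z) / m := fun a => by
      simp only [Finset.sum_div, mul_div_assoc]
    have hmem : (fun z => r z / m) ∈ predSet L y := by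
      refine (mem_predSet_iff L y _).2 ⟨⟨fun z => div_nonneg (hr z) hpos.le, ?_⟩, fun z => ?_⟩
      · rw [← Finset.sum_div, ← hm, div_self hpos.ne']
      · simp only [scale]
        exact div_le_div_of_nonneg_right (hopt z) hpos.le
    have hle := le_csSup (isCompact_image_predSet L v y).bddAbove
      (Set.mem_image_of_mem _ hmem)
    simp only [scale, ← add_div] at hle
    rw [div_le_iff₀ hpos] at hle
    rw [SRM, sub_add_cancel, mul_comm]
    exact hle

lemma value_le_conditionalRisk {L : Y → Y → ℝ} {q : Y → ℝ} {Q : Y → Y → ℝ}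
    (hU : Q ∈ Upoly q) (hC : Q ∈ CL L) (v : Y → ℝ) :
    ∑ y, ∑ y', L y y' * Q y y' ≤ ∑ y, q y * SRM L v y := by
  obtain ⟨hQ, hrow, hcol⟩ := hU
  have hsum := Finset.sum_le_sum fun y (_ : y ∈ Finset.univ) =>
    row_value_le_mul_SRM v y (hQ y) (hC y)
  have hv : ∑ y, ∑ z, v z * Q y z = ∑ y, q y * v y := by
    rw [Finset.sum_comm]
    exact Finset.sum_congr rfl fun z _ => by rw [← Finset.mul_sum, hcol, mul_comm]
  simp only [hrow, mul_add, Finset.sum_add_distrib, hv] at hsum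
  linarith

/-- The column sums and the value of the matrix with rows `q y • p y`, linear in `p`. -/
def marginalValue (L : Y → Y → ℝ) (q : Y → ℝ) : (Y → Y → ℝ) →ₗ[ℝ] (Y → ℝ) × ℝ where
  toFun p := (fun y' => ∑ y, q y * p y y', ∑ y, ∑ y', L y y' * (q y * p y y'))
  map_add' p r := by
    ext <;> simp [mul_add, Finset.sum_add_distrib]
  map_smul' a p := by
    ext <;> simp [Finset.mul_sum, mul_left_comm]

lemma apply_eq_sum_add (f : (Y → ℝ) × ℝ →L[ℝ] ℝ) (u : Y → ℝ) (s : ℝ) :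
    f (u, s) = ∑ y, f (Pi.single y 1, 0) * u y + f (0, 1) * s := by
  have hu : (u, s) = ∑ y, u y • ((Pi.single y 1, 0) : (Y → ℝ) × ℝ) + s • (0, 1) := by
    ext <;> simp [Prod.fst_sum, Prod.snd_sum, Finset.sum_apply, Pi.single_apply]
  conv_lhs => rw [hu]
  simp only [map_add, map_sum, map_smul, smul_eq_mul, mul_comm]

lemma exists_rows_value_ge_HRM {L : Y → Y → ℝ} (hnonneg : ∀ y y', 0 ≤ L y y')
    (hself : ∀ y, L y y = 0) {q : Y → ℝ} (hbdd : BddBelow (Set.range fun v : Y → ℝ =>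
      ∑ y, q y * SRM L v y)) :
    ∃ p : Y → Y → ℝ, (∀ y, p y ∈ predSet L y) ∧ (∀ y', ∑ y, q y * p y y' = q y') ∧
      HRM L q ≤ ∑ y, ∑ y', L y y' * (q y * p y y') := by
  by_contra hno
  have hdisj : Disjoint (marginalValue L q '' Set.univ.pi (predSet L))
      ({q} ×ˢ Set.Ici (HRM L q)) := by
    rw [Set.disjoint_left]
    rintro _ ⟨p, hp, rfl⟩ ⟨hq, hH⟩
    exact hno ⟨p, fun y => hp y trivial, fun y' => congrFun hq y', hH⟩
  obtain ⟨f, α, β, hA, hαβ, hB⟩ := geometric_hahn_banach_compact_closed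
    ((convex_pi fun y _ => convex_predSet L y).linear_image (marginalValue L q))
    ((isCompact_univ_pi fun y => isCompact_predSet L y).image
      (marginalValue L q).continuous_of_finiteDimensional)
    ((convex_singleton q).prod (convex_Ici (HRM L q)))
    (isClosed_singleton.prod isClosed_Ici) hdisj
  set w : Y → ℝ := fun y => f (Pi.single y 1, 0)
  set c := f (0, 1)
  have hA' : ∀ p : Y → Y → ℝ, (∀ y, p y ∈ predSet L y) →
      ∑ z, w z * ∑ y, q y * p y z + c * ∑ y, ∑ y', L y y' * (q y * p y y') < α := fun p hp => by
    have h := hA _ (Set.mem_image_of_mem _ (fun y _ => hp y : p ∈ Set.univ.pi (predSet L)))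
    exact (apply_eq_sum_add f _ _).symm.trans_lt h
  have hB' : ∀ t, HRM L q ≤ t → β < ∑ z, w z * q z + c * t := fun t ht => by
    exact (hB (q, t) ⟨rfl, ht⟩).trans_eq (apply_eq_sum_add f q t)
  have hdiag := hA' (fun y => Pi.single y 1) (single_mem_predSet hnonneg hself)
  simp only [Pi.single_apply, mul_ite, mul_one, mul_zero, Finset.sum_ite_eq, Finset.mem_univ,
    if_true, Finset.sum_ite_eq', hself, zero_mul, Finset.sum_const_zero, add_zero] at hdiag
  have hcpos : 0 < c := by
    have h1 := hB' (max (HRM L q) 1) (le_max_left _ _)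
    have h2 : 0 < max (HRM L q) 1 := lt_of_lt_of_le one_pos (le_max_right _ _)
    exact pos_of_mul_pos_left (by linarith) h2.le
  choose p hp hpmax using fun y => (isCompact_image_predSet L (fun z => w z / c) y).sSup_mem
    ⟨_, Set.mem_image_of_mem _ (single_mem_predSet hnonneg hself y)⟩
  have hrisk : c * ∑ y, q y * SRM L (fun z => w z / c) y =
      ∑ z, w z * ∑ y, q y * p y z + c * ∑ y, ∑ y', L y y' * (q y * p y y')
        - ∑ z, w z * q z := by
    have hswap : ∑ z, w z * ∑ y, q y * p y z = ∑ y, ∑ z, w z * (q y * p y z) := by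
      simp only [Finset.mul_sum]
      exact Finset.sum_comm
    rw [hswap, Finset.mul_sum, Finset.mul_sum, ← Finset.sum_add_distrib, ← Finset.sum_sub_distrib]
    refine Finset.sum_congr rfl fun y _ => ?_
    rw [SRM, ← hpmax y]
    have e1 : ∑ z, w z * (q y * p y z) = c * q y * ∑ z, w z / c * p y z := by
      rw [Finset.mul_sum]
      exact Finset.sum_congr rfl fun z _ => by field_simp
    have e2 : ∑ y', L y y' * (q y * p y y') = q y * ∑ y', L y y' * p y y' := by
      rw [Finset.mul_sum]
      exact Finset.sum_congr rfl fun z _ => by ring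
    rw [e1, e2]
    field_simp
    ring
  have hinf : c * HRM L q ≤ c * ∑ y, q y * SRM L (fun z => w z / c) y :=
    mul_le_mul_of_nonneg_left (ciInf_le hbdd _) hcpos.le
  linarith [hA' p hp, hB' _ le_rfl]

lemma diagonal_mem_Upoly_inter_CL {L : Y → Y → ℝ} (hnonneg : ∀ y y', 0 ≤ L y y')
    (hself : ∀ y, L y y = 0) {q : Y → ℝ} (hq : ∀ y, 0 ≤ q y) :
    (fun y => Pi.single y (q y)) ∈ Upoly q ∩ CL L := by
  refine ⟨⟨fun y => ?_, fun y => ?_, fun y' => ?_⟩, fun y z => ?_⟩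
  · exact fun y' => (Pi.single_nonneg.2 (hq y) : (0 : Y → ℝ) ≤ Pi.single y (q y)) y'
  · simp [Pi.single_apply]
  · simp [Pi.single_apply]
  · simpa [Pi.single_apply, hself] using mul_nonneg (hnonneg z y) (hq y)

theorem stmt10 (Y : Type*) [Fintype Y] [DecidableEq Y] [Nonempty Y] (L : Y → Y → ℝ)
    (hcard : 2 ≤ Fintype.card Y)
    (hnonneg : ∀ y y', 0 ≤ L y y')
    (hzero : ∀ y y', L y y' = 0 ↔ y = y') :
    ∀ q ∈ simplexSet Y,
      IsGreatest ((fun Q => ∑ y, ∑ y', L y y' * Q y y') '' (Upoly q ∩ CL L)) (HRM L q) := by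
  intro q hq
  have hself : ∀ y, L y y = 0 := fun y => (hzero y y).2 rfl
  have hdiag := diagonal_mem_Upoly_inter_CL hnonneg hself hq.1
  have hbdd : BddBelow (Set.range fun v : Y → ℝ => ∑ y, q y * SRM L v y) :=
    ⟨_, Set.forall_mem_range.2 (value_le_conditionalRisk hdiag.1 hdiag.2)⟩
  have hupper : ∀ Q ∈ Upoly q ∩ CL L, ∑ y, ∑ y', L y y' * Q y y' ≤ HRM L q :=
    fun Q hQ => le_ciInf (value_le_conditionalRisk hQ.1 hQ.2)
  obtain ⟨p, hp, hcol, hval⟩ := exists_rows_value_ge_HRM hnonneg hself hbdd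
  have hmem : (fun y y' => q y * p y y') ∈ Upoly q ∩ CL L := by
    refine ⟨⟨fun y y' => mul_nonneg (hq.1 y) ((hp y).1.1 y'), fun y => ?_, hcol⟩, fun y z => ?_⟩
    · rw [← Finset.mul_sum, (hp y).1.2, mul_one]
    · simp only [mul_left_comm _ (q y), ← Finset.mul_sum]
      exact mul_le_mul_of_nonneg_left (((mem_predSet_iff L y _).1 (hp y)).2 z) (hq.1 y)
  exact ⟨⟨_, hmem, le_antisymm (hupper _ hmem) hval⟩, Set.forall_mem_image.2 hupper⟩
end
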